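/- Let R be a finitely generated ℕ-graded k-algebra (k any field) and M a finitely generated ℤ-graded R-module of Krull dimension d. Then: (1) the limit e_M = d!·lim_{n→∞} n^{-d} Σ_{j≤n} λ_k(M_j) exists; and (2) lim_{t→1⁻} (1−t)^d H_M(t) = e_M, where H_M(t) = Σ_{j∈ℤ} λ_k(M_j) t^j is the Hilbert series of M evaluated at real t ∈ (0,1). -/

import Mathlib

/-!
By Noetherian induction, the growth statement is proved for all quotients `M ⧸ N` by homogeneous
submodules `N`. If every homogeneous element of positive degree kills `M ⧸ N`, the quotient lives in
finitely many degrees. Otherwise pick such an `r` of degree `a` with `r • M` not contained in `N`.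
Multiplication by `r` gives exact sequences
`0 → (M ⧸ (N : r))_{j - a} → (M ⧸ N)_j → (M ⧸ (N + r • M))_j → 0`,
and `N + r • M` is strictly larger than `N`. If `(N : r)` is also strictly larger, both outer terms
are known. If `(N : r) = N`, then `r` is regular on `M ⧸ N`, so the dimension of `M ⧸ (N + r • M)`
drops, and the partial sums satisfy `S n = F n + S (n - a)` with `F n / n ^ (d - 1)` convergent,
which forces `S n / n ^ d` to converge.

The Hilbert series is `(1 - t) * ∑ S n * t ^ n`, so its behaviour as `t → 1⁻` follows by comparing
`S n` with `(n + d).choose d`, whose generating function is `(1 - t)⁻¹ ^ (d + 1)`.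
-/

open Filter

noncomputable section

section

open Asymptotics DirectSum Function Set Topology
open scoped Nat Pointwise

theorem tendsto_div_of_tendsto_sub_div_sub {u v : ℕ → ℝ} {L : ℝ} (hv : StrictMono v)
    (hv' : Tendsto v atTop atTop)
    (h : Tendsto (fun n => (u (n + 1) - u n) / (v (n + 1) - v n)) atTop (𝓝 L)) :
    Tendsto (fun n => u n / v n) atTop (𝓝 L) := by
  have hpos (n : ℕ) : 0 < v (n + 1) - v n := sub_pos.2 (hv n.lt_succ_self)
  have hstep : (fun n => (u (n + 1) - u n) - L * (v (n + 1) - v n))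
      =o[atTop] fun n => v (n + 1) - v n := by
    rw [isLittleO_iff_tendsto fun n hn => absurd hn (hpos n).ne']
    simpa [sub_div, mul_div_assoc, div_self (hpos _).ne'] using h.sub_const L
  have hv₀ (c : ℝ) : (fun _ : ℕ => c) =o[atTop] v :=
    isLittleO_const_left.2 (.inr (tendsto_norm_atTop_atTop.comp hv'))
  have hsum : (fun n => (u n - u 0) - L * (v n - v 0)) =o[atTop] fun n => v n - v 0 := by
    have := hstep.sum_range (fun n => (hpos n).le) (by
      simp only [Finset.sum_range_sub]
      exact tendsto_atTop_add_const_right _ (-v 0) hv')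
    refine (this.congr_left fun n => ?_).congr_right fun n => Finset.sum_range_sub v n
    rw [Finset.sum_sub_distrib, ← Finset.mul_sum, Finset.sum_range_sub, Finset.sum_range_sub]
  have hlittle : (fun n => u n - L * v n) =o[atTop] v := by
    have := (hsum.trans_isBigO ((isBigO_refl v atTop).sub (hv₀ (v 0)).isBigO)).add
      (hv₀ (u 0 - L * v 0))
    exact this.congr_left fun n => by ring
  refine tendsto_sub_nhds_zero_iff.1 (hlittle.tendsto_div_nhds_zero.congr' ?_)
  filter_upwards [hv'.eventually_ne_atTop 0] with n hn
  field_simp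

theorem tendsto_add_one_pow_sub_pow_div_pow (d : ℕ) :
    Tendsto (fun n : ℕ => (((n + 1 : ℕ) : ℝ) ^ (d + 1) - (n : ℝ) ^ (d + 1)) / (n : ℝ) ^ d) atTop
      (𝓝 (d + 1)) := by
  have hderiv := (hasDerivAt_pow (d + 1) (1 : ℝ)).tendsto_slope_zero
  have hinv : Tendsto (fun n : ℕ => (n : ℝ)⁻¹) atTop (𝓝[≠] 0) :=
    (tendsto_inv_atTop_nhdsGT_zero.mono_right (nhdsGT_le_nhdsNE 0)).comp
      tendsto_natCast_atTop_atTop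
  have := hderiv.comp hinv
  simp only [Nat.cast_add, Nat.cast_one, one_pow, mul_one] at this
  refine this.congr' ?_
  filter_upwards [eventually_ne_atTop 0] with n hn
  have : (n : ℝ) ≠ 0 := Nat.cast_ne_zero.2 hn
  have hsplit : 1 + (n : ℝ)⁻¹ = (n + 1) / n := by field_simp
  simp only [comp_apply, inv_inv, smul_eq_mul, hsplit, div_pow, Nat.cast_add, Nat.cast_one]
  field_simp
  ring

/-- `F n ∼ L * n ^ d` as `n → ∞`, in the form `F n / n ^ d → L` so that `L = 0` is allowed and
means `F n = o(n ^ d)`. -/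
def HasPolyGrowth (F : ℤ → ℝ) (d : ℕ) (L : ℝ) : Prop :=
  Tendsto (fun n : ℤ => F n / (n : ℝ) ^ d) atTop (𝓝 L)

namespace HasPolyGrowth

variable {F G S : ℤ → ℝ} {d : ℕ} {L K : ℝ}

theorem tendsto_natCast (h : HasPolyGrowth F d L) :
    Tendsto (fun n : ℕ => F n / (n : ℝ) ^ d) atTop (𝓝 L) := by
  simpa only [comp_def, Int.cast_natCast] using
    Tendsto.comp h (tendsto_natCast_atTop_atTop (R := ℤ))

theorem of_tendsto_natCast (h : Tendsto (fun n : ℕ => F n / (n : ℝ) ^ d) atTop (𝓝 L)) :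
    HasPolyGrowth F d L := by
  rw [HasPolyGrowth, ← Nat.map_cast_int_atTop, tendsto_map'_iff]
  simpa only [comp_def, Int.cast_natCast] using h

theorem add (hF : HasPolyGrowth F d L) (hG : HasPolyGrowth G d K) :
    HasPolyGrowth (F + G) d (L + K) := by
  simpa [HasPolyGrowth, add_div] using Tendsto.add hF hG

theorem comp_sub_const (h : HasPolyGrowth F d L) (a : ℤ) :
    HasPolyGrowth (fun n => F (n - a)) d L := by
  have hratio : Tendsto (fun n : ℤ => (((n - a : ℤ) : ℝ) / n) ^ d) atTop (𝓝 1) := by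
    have hdiv : Tendsto (fun n : ℤ => (a : ℝ) / n) atTop (𝓝 0) :=
      tendsto_const_nhds.div_atTop tendsto_intCast_atTop_atTop
    have := (hdiv.const_sub 1).pow d
    simp only [sub_zero, one_pow] at this
    refine this.congr' ?_
    filter_upwards [eventually_ne_atTop 0] with n hn
    have : (n : ℝ) ≠ 0 := Int.cast_ne_zero.2 hn
    rw [Int.cast_sub, sub_div, div_self this]
  have hcomp := (Tendsto.comp h (tendsto_atTop_add_const_right _ (-a) tendsto_id)).mul hratio
  rw [mul_one] at hcomp
  refine hcomp.congr' ?_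
  filter_upwards [eventually_gt_atTop a] with n hn
  have : ((n - a : ℤ) : ℝ) ≠ 0 := Int.cast_ne_zero.2 (sub_pos.2 hn).ne'
  simp only [comp_apply, id, ← sub_eq_add_neg, div_pow]
  field_simp

theorem exists_of_eventually_eq_const {c : ℝ} (h : ∀ᶠ n in atTop, F n = c) (d : ℕ) :
    ∃ L, HasPolyGrowth F d L := by
  have hconst : ∃ L, Tendsto (fun n : ℤ => c / (n : ℝ) ^ d) atTop (𝓝 L) := by
    rcases eq_or_ne d 0 with rfl | hd
    · exact ⟨c, by simp⟩
    · exact ⟨0, tendsto_const_nhds.div_atTop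
        ((tendsto_pow_atTop hd).comp tendsto_intCast_atTop_atTop)⟩
  exact hconst.imp fun L hL => hL.congr' <| h.mono fun n hn => by simp only [hn]

theorem of_sub_pred (h : HasPolyGrowth (fun n => F n - F (n - 1)) d L) :
    HasPolyGrowth F (d + 1) (L / (d + 1)) := by
  refine of_tendsto_natCast <| tendsto_div_of_tendsto_sub_div_sub
    (v := fun n : ℕ => (n : ℝ) ^ (d + 1)) ?_ ?_ ?_
  · exact fun m n hmn => by dsimp only; gcongr
  · exact (tendsto_pow_atTop d.succ_ne_zero).comp tendsto_natCast_atTop_atTop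
  · have hdiff := (h.comp_sub_const (-1)).tendsto_natCast
    refine (hdiff.div (tendsto_add_one_pow_sub_pow_div_pow d) d.cast_add_one_ne_zero).congr' ?_
    filter_upwards [eventually_ne_atTop 0] with n hn
    have : (n : ℝ) ^ d ≠ 0 := pow_ne_zero _ (Nat.cast_ne_zero.2 hn)
    simp [div_div_div_cancel_right₀ this]

-- `T n = ∑_{i < a} S (n - i)` telescopes to `T n - T (n - 1) = F n`, so its growth follows from
-- that of `F`; monotonicity gives `T n ≤ a * S n ≤ T (n + a)`.
theorem of_eq_add_comp_sub (hS : Monotone S) {a : ℕ} (ha : 0 < a)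
    (hSF : ∀ n, S n = F n + S (n - a)) (hF : HasPolyGrowth F d L) :
    HasPolyGrowth S (d + 1) (L / (d + 1) / a) := by
  set T : ℤ → ℝ := fun n => ∑ i ∈ Finset.range a, S (n - i)
  have hT : HasPolyGrowth T (d + 1) (L / (d + 1)) := by
    refine of_sub_pred (hF.congr fun n => ?_)
    have htele := Finset.sum_range_sub (fun i : ℕ => S (n - i)) a
    simp only [Finset.sum_sub_distrib, Nat.cast_add, Nat.cast_one, Nat.cast_zero, sub_zero,
      ← sub_sub, sub_right_comm n _ 1] at htele
    simp only [T]
    congr 1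
    linarith [hSF n]
  have hlow (n : ℤ) : T n / a ≤ S n := by
    rw [div_le_iff₀' (by positivity)]
    simpa using Finset.sum_le_card_nsmul (Finset.range a) _ (S n) fun i _ => hS (by omega)
  have hup (n : ℤ) : S n ≤ T (n - -a) / a := by
    rw [le_div_iff₀' (by positivity)]
    simpa using Finset.card_nsmul_le_sum (Finset.range a) (fun i : ℕ => S (n - -a - i)) (S n)
      fun i hi => hS (by have := Finset.mem_range.1 hi; omega)
  refine tendsto_of_tendsto_of_tendsto_of_le_of_le' (Tendsto.div_const hT a)
    (Tendsto.div_const (hT.comp_sub_const (-a)) a) ?_ ?_ <;>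
  filter_upwards [eventually_ge_atTop 0] with n hn
  · rw [div_right_comm]
    gcongr
    exact hlow n
  · rw [div_right_comm]
    gcongr
    exact hup n

end HasPolyGrowth

/-- The partial sums `∑_{j ≤ n} f j` of a two-sided sequence; as a `tsum` this is only meaningful
if the terms are summable at `-∞`, for instance if the support of `f` is bounded below. -/
def cumulativeSum (f : ℤ → ℝ) (n : ℤ) : ℝ :=
  ∑' j : ℤ, if j ≤ n then f j else 0

section CumulativeSum

variable {f g : ℤ → ℝ}

theorem summable_ite_le_of_bddBelow_support (hf : BddBelow (support f)) (n : ℤ) :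
    Summable fun j : ℤ => if j ≤ n then f j else 0 := by
  obtain ⟨b, hb⟩ := hf
  refine summable_of_hasFiniteSupport ((finite_Icc b n).subset fun j hj => ?_)
  simp only [mem_support, ne_eq, ite_eq_right_iff, Classical.not_imp] at hj
  exact ⟨hb hj.2, hj.1⟩

theorem cumulativeSum_add (hf : BddBelow (support f)) (hg : BddBelow (support g)) :
    cumulativeSum (f + g) = cumulativeSum f + cumulativeSum g := by
  ext n
  simp only [cumulativeSum, Pi.add_apply, ite_add_zero]
  exact (summable_ite_le_of_bddBelow_support hf n).tsum_add
    (summable_ite_le_of_bddBelow_support hg n)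

theorem cumulativeSum_comp_sub_const (f : ℤ → ℝ) (a : ℤ) :
    cumulativeSum (fun j => f (j - a)) = fun n => cumulativeSum f (n - a) := by
  ext n
  simp only [cumulativeSum, ← (Equiv.subRight a).tsum_eq fun j => if j ≤ n - a then f j else 0,
    Equiv.subRight_apply, sub_le_sub_iff_right]

theorem cumulativeSum_sub_cumulativeSum_pred (hf : BddBelow (support f)) (n : ℤ) :
    cumulativeSum f n - cumulativeSum f (n - 1) = f n := by
  rw [cumulativeSum, cumulativeSum, ← (summable_ite_le_of_bddBelow_support hf n).tsum_sub
    (summable_ite_le_of_bddBelow_support hf (n - 1)), tsum_eq_single n]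
  · simp
  · intro j hj
    have : j ≤ n - 1 ↔ j ≤ n := by omega
    simp [this]

theorem cumulativeSum_monotone (hf : BddBelow (support f)) (hf₀ : 0 ≤ f) :
    Monotone (cumulativeSum f) := fun m n hmn =>
  (summable_ite_le_of_bddBelow_support hf m).tsum_le_tsum (fun j => by
    have := hf₀ j
    split_ifs <;> first | omega | simp_all) (summable_ite_le_of_bddBelow_support hf n)

theorem cumulativeSum_eq_zero_of_lt {b n : ℤ} (hf : b ∈ lowerBounds (support f)) (hn : n < b) :
    cumulativeSum f n = 0 := by
  refine (tsum_congr fun j => ?_).trans tsum_zero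
  exact ite_eq_right_iff.2 fun hj =>
    notMem_support.1 fun hjf => ((hf hjf).trans hj).not_gt hn

theorem cumulativeSum_eventually_eq_tsum (hf : (support f).Finite) :
    ∀ᶠ n in atTop, cumulativeSum f n = ∑' j, f j := by
  obtain ⟨b, hb⟩ := hf.bddAbove
  filter_upwards [eventually_ge_atTop b] with n hn
  refine tsum_congr fun j => ?_
  by_cases hj : j ∈ support f
  · exact if_pos ((hb hj).trans hn)
  · simp [notMem_support.1 hj]

end CumulativeSum

section Abel

variable {d : ℕ} {L : ℝ}

theorem isEquivalent_add_choose (d : ℕ) :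
    (fun n : ℕ => ((n + d).choose d : ℝ)) ~[atTop] fun n => (n : ℝ) ^ d / d ! := by
  have hshift : (fun n : ℕ => (n : ℝ) + d) ~[atTop] fun n => (n : ℝ) :=
    IsEquivalent.refl.add_const_of_norm_tendsto_atTop
      (tendsto_norm_atTop_atTop.comp tendsto_natCast_atTop_atTop)
  have hcomp := (isEquivalent_choose d).comp_tendsto (tendsto_add_atTop_nat d)
  refine hcomp.trans ?_
  simp only [comp_def, Nat.cast_add]
  exact (hshift.pow d).div .refl

theorem isLittleO_sub_mul_add_choose {F : ℕ → ℝ}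
    (hF : Tendsto (fun n : ℕ => F n / (n : ℝ) ^ d) atTop (𝓝 L)) :
    (fun n => F n - d ! * L * (n + d).choose d) =o[atTop] fun n => ((n + d).choose d : ℝ) := by
  have hpow : (fun n => F n - d ! * L * ((n : ℝ) ^ d / d !)) =o[atTop]
      fun n : ℕ => (n : ℝ) ^ d / d ! := by
    rw [isLittleO_iff_tendsto' (by
      filter_upwards [eventually_ne_atTop 0] with n hn h using absurd h (by positivity))]
    have := (hF.mul_const (d ! : ℝ)).sub_const (L * d !)
    rw [sub_self] at this
    refine this.congr' ?_
    filter_upwards [eventually_ne_atTop 0] with n hn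
    have : (n : ℝ) ≠ 0 := Nat.cast_ne_zero.2 hn
    field_simp
  have hchoose := isEquivalent_add_choose d
  refine IsLittleO.trans_isBigO ?_ hchoose.isBigO_symm
  refine (hpow.sub (hchoose.isLittleO.const_mul_left (d ! * L))).congr_left fun n => ?_
  simp only [Pi.sub_apply]
  ring

theorem summable_mul_pow_of_isBigO_add_choose {F : ℕ → ℝ}
    (hF : F =O[atTop] fun n => ((n + d).choose d : ℝ)) {t : ℝ} (ht : ‖t‖ < 1) :
    Summable fun n => F n * t ^ n :=
  summable_of_isBigO_nat (summable_choose_mul_geometric_of_norm_lt_one d ht)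
    (hF.mul (isBigO_refl _ _))

theorem exists_norm_one_sub_pow_mul_tsum_le {a : ℕ → ℝ}
    (ha : a =o[atTop] fun n => ((n + d).choose d : ℝ)) {ε : ℝ} (hε : 0 < ε) :
    ∃ C, ∀ t ∈ Ioo (0 : ℝ) 1,
      ‖(1 - t) ^ (d + 1) * ∑' n, a n * t ^ n‖ ≤ ε + (1 - t) ^ (d + 1) * C := by
  obtain ⟨N, hN⟩ := eventually_atTop.1 (ha.bound hε)
  refine ⟨∑ n ∈ Finset.range N, ‖a n‖, fun t ht => ?_⟩
  have hgeom : HasSum (fun n : ℕ => ε * (((n + d).choose d : ℝ) * t ^ n))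
      (ε * (1 / (1 - t) ^ (d + 1))) :=
    (hasSum_choose_mul_geometric_of_norm_lt_one d
      (by simpa [abs_of_pos ht.1] using ht.2)).mul_left ε
  have hhead : HasSum (fun n => if n ∈ Finset.range N then ‖a n‖ else 0)
      (∑ n ∈ Finset.range N, ‖a n‖) := by
    rw [← Finset.sum_congr rfl fun n hn => if_pos hn]
    exact hasSum_sum_of_ne_finset_zero fun n hn => if_neg hn
  have hle := tsum_of_norm_bounded (f := fun n => a n * t ^ n) (hgeom.add hhead) fun n => by
    have hpow := pow_pos ht.1 n
    rw [norm_mul, Real.norm_of_nonneg hpow.le]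
    split_ifs with hn
    · have := mul_le_of_le_one_right (norm_nonneg (a n)) (pow_le_one₀ (n := n) ht.1.le ht.2.le)
      exact this.trans (le_add_of_nonneg_left (by positivity))
    · have := hN n (by simpa using hn)
      rw [Real.norm_of_nonneg (Nat.cast_nonneg _)] at this
      rw [add_zero, ← mul_assoc]
      gcongr
  have hpos : 0 < (1 - t) ^ (d + 1) := pow_pos (sub_pos.2 ht.2) _
  rw [norm_mul, Real.norm_of_nonneg hpos.le]
  refine (mul_le_mul_of_nonneg_left hle hpos.le).trans_eq ?_
  field_simp

theorem tendsto_one_sub_pow_mul_tsum_of_isLittleO {a : ℕ → ℝ}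
    (ha : a =o[atTop] fun n => ((n + d).choose d : ℝ)) :
    Tendsto (fun t : ℝ => (1 - t) ^ (d + 1) * ∑' n, a n * t ^ n) (𝓝[Ioo 0 1] 1) (𝓝 0) := by
  refine Metric.tendsto_nhds.2 fun ε hε => ?_
  obtain ⟨C, hC⟩ := exists_norm_one_sub_pow_mul_tsum_le ha (half_pos hε)
  have hlim : Tendsto (fun t : ℝ => ε / 2 + (1 - t) ^ (d + 1) * C) (𝓝[Ioo 0 1] 1) (𝓝 (ε / 2)) :=
    tendsto_nhdsWithin_of_tendsto_nhds <| Continuous.tendsto' (by fun_prop) _ _ (by simp)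
  filter_upwards [self_mem_nhdsWithin, hlim.eventually_lt_const (half_lt_self hε)] with t ht hlt
  rw [dist_zero_right]
  exact (hC t ht).trans_lt hlt

theorem tendsto_one_sub_pow_mul_tsum {F : ℕ → ℝ}
    (hF : Tendsto (fun n : ℕ => F n / (n : ℝ) ^ d) atTop (𝓝 L)) :
    Tendsto (fun t : ℝ => (1 - t) ^ (d + 1) * ∑' n, F n * t ^ n) (𝓝[Ioo 0 1] 1)
      (𝓝 (d ! * L)) := by
  have hF' := isLittleO_sub_mul_add_choose hF
  have hlim := (tendsto_one_sub_pow_mul_tsum_of_isLittleO hF').add_const (d ! * L)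
  rw [zero_add] at hlim
  refine hlim.congr' ?_
  filter_upwards [self_mem_nhdsWithin] with t ht
  have hnorm : ‖t‖ < 1 := by simpa [abs_of_pos ht.1] using ht.2
  have hrem := summable_mul_pow_of_isBigO_add_choose hF'.isBigO hnorm
  have hmain := (hasSum_choose_mul_geometric_of_norm_lt_one d hnorm).mul_left (d ! * L)
  have hsum : ∑' n, F n * t ^ n = ∑' n, (F n - d ! * L * (n + d).choose d) * t ^ n +
      d ! * L * (1 / (1 - t) ^ (d + 1)) := by
    rw [← hmain.tsum_eq, ← hrem.tsum_add hmain.summable]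
    exact tsum_congr fun n => by ring
  have : (1 - t) ^ (d + 1) ≠ 0 := pow_ne_zero _ (sub_pos.2 ht.2).ne'
  rw [hsum]
  field_simp

namespace HasPolyGrowth

variable {S : ℤ → ℝ} {b : ℤ}

theorem hasSum_mul_zpow (hS : HasPolyGrowth S d L) (hb : b ∈ lowerBounds (support S)) {t : ℝ}
    (ht : t ∈ Ioo (0 : ℝ) 1) :
    HasSum (fun n : ℤ => S n * t ^ n) (t ^ b * ∑' n : ℕ, S (n + b) * t ^ n) := by
  have hF := (hS.comp_sub_const (-b)).tendsto_natCast
  simp only [sub_neg_eq_add] at hF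
  have hbigO := (isLittleO_sub_mul_add_choose hF).isBigO.add
    ((isBigO_refl (fun n : ℕ => ((n + d).choose d : ℝ)) atTop).const_mul_left (d ! * L))
  simp only [sub_add_cancel] at hbigO
  have hnorm : ‖t‖ < 1 := by simpa [abs_of_pos ht.1] using ht.2
  have hsum := (summable_mul_pow_of_isBigO_add_choose hbigO hnorm).hasSum.mul_left (t ^ b)
  have hinj : Injective fun n : ℕ => (n : ℤ) + b := fun m n h => by simpa using h
  refine (hinj.hasSum_iff fun n hn => ?_).1 (hsum.congr_fun fun n => ?_)
  · have : S n = 0 := by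
      by_contra hSn
      exact hn ⟨(n - b).toNat, by have := hb hSn; dsimp only; omega⟩
    rw [this, zero_mul]
  · simp only [comp_apply, zpow_add₀ ht.1.ne', zpow_natCast]
    ring

theorem tendsto_one_sub_pow_mul_tsum_zpow (hS : HasPolyGrowth S d L)
    (hb : BddBelow (support S)) :
    Tendsto (fun t : ℝ => (1 - t) ^ (d + 1) * ∑' n, S n * t ^ n) (𝓝[Ioo 0 1] 1)
      (𝓝 (d ! * L)) := by
  obtain ⟨b, hb⟩ := hb
  have hF := (hS.comp_sub_const (-b)).tendsto_natCast
  have hzpow : Tendsto (fun t : ℝ => t ^ b) (𝓝[Ioo 0 1] 1) (𝓝 1) := by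
    simpa using (continuousAt_zpow₀ (1 : ℝ) b (.inl one_ne_zero)).tendsto.mono_left
      nhdsWithin_le_nhds
  have hlim := hzpow.mul (_root_.tendsto_one_sub_pow_mul_tsum hF)
  rw [one_mul] at hlim
  refine hlim.congr' ?_
  filter_upwards [self_mem_nhdsWithin] with t ht
  rw [(hS.hasSum_mul_zpow hb ht).tsum_eq, mul_left_comm]
  simp only [sub_neg_eq_add]

end HasPolyGrowth

theorem bddBelow_support_cumulativeSum {f : ℤ → ℝ} (hf : BddBelow (support f)) :
    BddBelow (support (cumulativeSum f)) :=
  hf.imp fun _ hb _ hn => not_lt.1 fun hlt => hn (cumulativeSum_eq_zero_of_lt hb hlt)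

theorem tendsto_one_sub_pow_mul_tsum_of_cumulativeSum {f : ℤ → ℝ} (hf : BddBelow (support f))
    (hS : HasPolyGrowth (cumulativeSum f) d L) :
    Tendsto (fun t : ℝ => (1 - t) ^ d * ∑' n, f n * t ^ n) (𝓝[Ioo 0 1] 1) (𝓝 (d ! * L)) := by
  have hb := bddBelow_support_cumulativeSum hf
  refine (hS.tendsto_one_sub_pow_mul_tsum_zpow hb).congr' ?_
  filter_upwards [self_mem_nhdsWithin] with t ht
  have hsum : Summable fun n => cumulativeSum f n * t ^ n :=
    have ⟨_, hb⟩ := hb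
    (hS.hasSum_mul_zpow hb ht).summable
  have hshift : HasSum (fun n => cumulativeSum f (n - 1) * t ^ n)
      (t * ∑' n, cumulativeSum f n * t ^ n) := by
    refine (Equiv.addRight (1 : ℤ)).hasSum_iff.1 ((hsum.hasSum.mul_left t).congr_fun fun n => ?_)
    simp only [comp_apply, Equiv.coe_addRight, add_sub_cancel_right, zpow_add_one₀ ht.1.ne']
    ring
  have hdiff : ∑' n, f n * t ^ n = (1 - t) * ∑' n, cumulativeSum f n * t ^ n := by
    rw [one_sub_mul, ← (hsum.hasSum.sub hshift).tsum_eq]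
    exact tsum_congr fun n => by rw [← sub_mul, cumulativeSum_sub_cumulativeSum_pred hf]
  rw [hdiff, ← mul_assoc, ← pow_succ]

end Abel

section Graded

variable {k R M : Type*} [CommRing k] [CommRing R] [Algebra k R] [AddCommGroup M] [Module R M]
  [Module k M] {𝒜 : ℤ → Submodule k R} {ℳ : ℤ → Submodule k M} [Decomposition ℳ]
  [SetLike.GradedSMul 𝒜 ℳ] {N : Submodule R M} {a : ℤ} {r : R}

theorem decompose_smul_of_mem (hr : r ∈ 𝒜 a) (m : M) (j : ℤ) :
    (decompose ℳ (r • m) j : M) = r • (decompose ℳ m (j - a) : M) := by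
  induction m using Decomposition.inductionOn ℳ with
  | zero => simp
  | @homogeneous i m =>
    have hmem : r • (m : M) ∈ ℳ (a + i) := SetLike.GradedSMul.smul_mem hr m.2
    rcases eq_or_ne (a + i) j with rfl | hne
    · rw [decompose_of_mem_same ℳ hmem, add_sub_cancel_left, decompose_of_mem_same ℳ m.2]
    · rw [decompose_of_mem_ne ℳ hmem hne, decompose_of_mem_ne ℳ m.2 (by omega), smul_zero]
  | add m n hm hn => simp [smul_add, decompose_add, hm, hn]

theorem decompose_add_smul_of_mem (hr : r ∈ 𝒜 a) (n m : M) (j : ℤ) :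
    (decompose ℳ (n + r • m) j : M) = decompose ℳ n j + r • decompose ℳ m (j - a) := by
  rw [decompose_add, DirectSum.add_apply, Submodule.coe_add, decompose_smul_of_mem hr]

theorem isHomogeneous_comap_lsmul (hN : N.IsHomogeneous ℳ) (hr : r ∈ 𝒜 a) :
    (N.comap (LinearMap.lsmul R M r)).IsHomogeneous ℳ := fun j m hm => by
  have := hN (j + a) hm
  rwa [LinearMap.lsmul_apply, decompose_smul_of_mem hr, add_sub_cancel_right] at this

theorem isHomogeneous_sup_smul_top (hN : N.IsHomogeneous ℳ) (hr : r ∈ 𝒜 a) :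
    (N ⊔ r • (⊤ : Submodule R M)).IsHomogeneous ℳ := fun j m hm => by
  obtain ⟨n, hn, _, ⟨x, -, rfl⟩, rfl⟩ := Submodule.mem_sup.1 hm
  exact decompose_add_smul_of_mem (ℳ := ℳ) hr n x j ▸
    Submodule.add_mem_sup (hN j hn) (Submodule.smul_mem_pointwise_smul _ _ _ trivial)

-- `J` is a set of degrees avoided modulo `N` by the generators; the condition on `𝒜` says that
-- acting on `M ⧸ N` cannot bring elements into `J` from outside.
theorem decompose_mem_of_span_eq_top [GradedAlgebra 𝒜] {s : Set M} (hs : Submodule.span R s = ⊤)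
    (hN : N.IsHomogeneous ℳ) {J : Set ℤ}
    (h𝒜 : ∀ i, ∀ r ∈ 𝒜 i, (∀ m : M, r • m ∈ N) ∨ ∀ j ∈ J, j - i ∈ J)
    (hsJ : ∀ m ∈ s, ∀ j ∈ J, (decompose ℳ m j : M) ∈ N) (m : M) :
    ∀ j ∈ J, (decompose ℳ m j : M) ∈ N := by
  have hm : m ∈ Submodule.span R s := hs ▸ Submodule.mem_top
  induction hm using Submodule.span_induction with
  | mem m hm => exact hsJ m hm
  | zero => simp
  | add m n _ _ hm hn =>
    intro j hj
    rw [decompose_add, DirectSum.add_apply, Submodule.coe_add]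
    exact N.add_mem (hm j hj) (hn j hj)
  | smul r m _ hm =>
    intro j hj
    induction r using Decomposition.inductionOn 𝒜 with
    | zero => simp
    | @homogeneous i r =>
      rcases h𝒜 i r r.2 with hr | hJ
      · exact hN j (hr m)
      · exact decompose_smul_of_mem (ℳ := ℳ) r.2 m j ▸ N.smul_mem _ (hm _ (hJ j hj))
    | add r r' hr hr' =>
      rw [add_smul, decompose_add, DirectSum.add_apply, Submodule.coe_add]
      exact N.add_mem hr hr'

theorem finite_setOf_exists_decompose_ne_zero {s : Set M} (hs : s.Finite) :
    {j | ∃ m ∈ s, (decompose ℳ m j : M) ≠ 0}.Finite := by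
  classical
  refine (hs.biUnion fun m _ => (decompose ℳ m).support.finite_toSet).subset ?_
  rintro j ⟨m, hm, hne⟩
  exact mem_biUnion hm (by simpa using hne)

variable (ℳ) in
theorem exists_forall_lt_eq_bot [GradedAlgebra 𝒜] [Module.Finite R M]
    (h𝒜 : ∀ t < 0, 𝒜 t = ⊥) : ∃ b : ℤ, ∀ j < b, ℳ j = ⊥ := by
  obtain ⟨s, hs⟩ := Module.Finite.fg_top (R := R) (M := M)
  obtain ⟨b, hb⟩ := (finite_setOf_exists_decompose_ne_zero (ℳ := ℳ) s.finite_toSet).bddBelow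
  refine ⟨b, fun j hj => (Submodule.eq_bot_iff _).2 fun m hm => ?_⟩
  rw [← decompose_of_mem_same ℳ hm]
  refine decompose_mem_of_span_eq_top (𝒜 := 𝒜) (N := ⊥) (J := Iio b) hs ?_ ?_ ?_ m j hj
  · rintro i _ rfl
    simp
  · intro i r hr
    rcases lt_or_ge i 0 with hi | hi
    · exact .inl fun m => by simp [(Submodule.mem_bot k).1 (h𝒜 i hi ▸ hr)]
    · exact .inr fun j hj => (sub_le_self j hi).trans_lt hj
  · exact fun m hm j hj => by_contra fun hne => (hb ⟨m, hm, hne⟩).not_gt hj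

theorem eq_top_of_sup_smul_top_eq_top {b : ℤ} (hb : ∀ j < b, ℳ j = ⊥) (hN : N.IsHomogeneous ℳ)
    (ha : 0 < a) (hr : r ∈ 𝒜 a) (h : N ⊔ r • (⊤ : Submodule R M) = ⊤) : N = ⊤ := by
  have hmem (n : ℕ) : ∀ j < b + n, ∀ m : M, (decompose ℳ m j : M) ∈ N := by
    induction n with
    | zero =>
      intro j hj m
      have := (decompose ℳ m j).2
      simp_all
    | succ n ih =>
      intro j hj m
      obtain ⟨x, hx, _, ⟨y, -, rfl⟩, rfl⟩ := Submodule.mem_sup.1 (h ▸ Submodule.mem_top : m ∈ _)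
      exact decompose_add_smul_of_mem (ℳ := ℳ) hr x y j ▸
        N.add_mem (hN j hx) (N.smul_mem r (ih (j - a) (by omega) y))
  refine Submodule.eq_top_iff'.2 fun m => (hN.mem_iff ℳ).2 fun j => ?_
  exact hmem (j + 1 - b).toNat j (by omega) m

end Graded

section HilbertFunction

variable {k R M : Type*} [CommRing k] [CommRing R] [Algebra k R] [AddCommGroup M] [Module R M]
  [Module k M] [IsScalarTower k R M]

/-- The degree `j` component `N ∩ ℳ j` of a submodule `N`, as a submodule of `ℳ j`. -/
def gradedPiece (ℳ : ℤ → Submodule k M) (N : Submodule R M) (j : ℤ) : Submodule k (ℳ j) :=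
  (N.restrictScalars k).submoduleOf (ℳ j)

/-- The length over `k` of the degree `j` component of `M ⧸ N`. Modelling the component as
`ℳ j ⧸ (N ∩ ℳ j)` avoids equipping `M ⧸ N` with a grading. -/
def gradedLength (ℳ : ℤ → Submodule k M) (N : Submodule R M) (j : ℤ) : ℕ∞ :=
  Module.length k (ℳ j ⧸ gradedPiece ℳ N j)

/-- The Hilbert function of `M ⧸ N`, with the junk value `0` in degrees whose component has
infinite length. -/
def hilbertFunction (ℳ : ℤ → Submodule k M) (N : Submodule R M) (j : ℤ) : ℝ :=
  (gradedLength ℳ N j).toNat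

variable {𝒜 : ℤ → Submodule k R} {ℳ : ℤ → Submodule k M} {N N' : Submodule R M} {a j : ℤ}
  {r : R}

@[simp]
theorem mem_gradedPiece {x : ℳ j} : x ∈ gradedPiece ℳ N j ↔ (x : M) ∈ N := Iff.rfl

theorem gradedPiece_mono (h : N ≤ N') (j : ℤ) : gradedPiece ℳ N j ≤ gradedPiece ℳ N' j :=
  fun _ hx => h hx

theorem gradedLength_anti (h : N ≤ N') (j : ℤ) : gradedLength ℳ N' j ≤ gradedLength ℳ N j :=
  Module.length_le_of_surjective _ (Submodule.factor_surjective (gradedPiece_mono h j))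

theorem gradedLength_eq_zero_iff : gradedLength ℳ N j = 0 ↔ ∀ m ∈ ℳ j, m ∈ N := by
  rw [gradedLength, Module.length_eq_zero_iff, Submodule.Quotient.subsingleton_iff,
    Submodule.eq_top_iff']
  simp

section SMul

variable [Decomposition ℳ] [SetLike.GradedSMul 𝒜 ℳ]

variable (ℳ) in
/-- Multiplication by an element of degree `a`, as a map of graded components. -/
def degreeSMul (hr : r ∈ 𝒜 a) (j : ℤ) : ℳ (j - a) →ₗ[k] ℳ j :=
  (Algebra.lsmul k k M r).restrict fun x hx => by
    have : r • x ∈ ℳ (a + (j - a)) := SetLike.GradedSMul.smul_mem hr hx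
    rwa [add_sub_cancel] at this

theorem gradedPiece_sup_smul_top (hN : N.IsHomogeneous ℳ) (hr : r ∈ 𝒜 a) (j : ℤ) :
    gradedPiece ℳ (N ⊔ r • (⊤ : Submodule R M)) j =
      gradedPiece ℳ N j ⊔ LinearMap.range (degreeSMul ℳ hr j) := by
  refine le_antisymm (fun m hm => ?_) (sup_le (gradedPiece_mono le_sup_left j) ?_)
  · obtain ⟨n, hn, _, ⟨x, -, rfl⟩, hm : n + r • x = m⟩ := Submodule.mem_sup.1 hm
    have hdeg : decompose ℳ n j + degreeSMul ℳ hr j (decompose ℳ x (j - a)) = m := by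
      refine Subtype.ext ((decompose_add_smul_of_mem hr n x j).symm.trans ?_)
      rw [hm, decompose_of_mem_same ℳ m.2]
    exact hdeg ▸ Submodule.add_mem_sup (hN j hn) (LinearMap.mem_range_self _ _)
  · rintro _ ⟨x, rfl⟩
    exact Submodule.mem_sup_right (Submodule.smul_mem_pointwise_smul _ _ _ trivial)

theorem gradedLength_eq_add (hN : N.IsHomogeneous ℳ) (hr : r ∈ 𝒜 a) (j : ℤ) :
    gradedLength ℳ N j = gradedLength ℳ (N.comap (LinearMap.lsmul R M r)) (j - a) +
      gradedLength ℳ (N ⊔ r • (⊤ : Submodule R M)) j := by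
  have hcomap : gradedPiece ℳ (N.comap (LinearMap.lsmul R M r)) (j - a) =
      (gradedPiece ℳ N j).comap (degreeSMul ℳ hr j) := rfl
  have hle := gradedPiece_mono (ℳ := ℳ) (le_sup_left : N ≤ N ⊔ r • ⊤) j
  refine Module.length_eq_add_of_exact (Submodule.mapQ _ _ (degreeSMul ℳ hr j) hcomap.le)
    (Submodule.factor hle) ?_ (Submodule.factor_surjective hle) ?_
  · rw [← LinearMap.ker_eq_bot, Submodule.ker_mapQ, hcomap, Submodule.mkQ_map_self]
  · rw [LinearMap.exact_iff, Submodule.factor, Submodule.ker_mapQ, Submodule.range_mapQ,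
      Submodule.comap_id, gradedPiece_sup_smul_top hN hr, Submodule.map_sup,
      Submodule.mkQ_map_self, bot_sup_eq]

end SMul

end HilbertFunction

theorem homogeneous_induction {k R M : Type*} [CommRing k] [CommRing R] [Algebra k R]
    [AddCommGroup M] [Module R M] [Module k M] {𝒜 : ℤ → Submodule k R} {ℳ : ℤ → Submodule k M}
    [Decomposition ℳ] [IsNoetherian R M] (h𝒜 : ∀ t < 0, 𝒜 t = ⊥) {P : Submodule R M → Prop}
    (base : ∀ N, N.IsHomogeneous ℳ → (∀ i ≠ 0, ∀ r ∈ 𝒜 i, ∀ m : M, r • m ∈ N) → P N)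
    (step : ∀ N, N.IsHomogeneous ℳ → ∀ a > 0, ∀ r ∈ 𝒜 a, N < N ⊔ r • (⊤ : Submodule R M) →
      (∀ N', N'.IsHomogeneous ℳ → N < N' → P N') → P N)
    {N : Submodule R M} (hN : N.IsHomogeneous ℳ) : P N := by
  induction N using WellFoundedGT.induction with
  | ind N ih =>
    by_cases h : ∀ i > 0, ∀ r ∈ 𝒜 i, ∀ m : M, r • m ∈ N
    · refine base N hN fun i hi r hr m => ?_
      rcases hi.lt_or_gt with hi | hi
      · simp [(Submodule.mem_bot k).1 (h𝒜 i hi ▸ hr)]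
      · exact h i hi r hr m
    · push Not at h
      obtain ⟨a, ha, r, hr, m, hm⟩ := h
      refine step N hN a ha r hr (left_lt_sup.2 fun hle => hm ?_) fun N' hN' hlt => ih N' hlt hN'
      exact hle (Submodule.smul_mem_pointwise_smul _ _ _ trivial)

section Finiteness

variable {k R M : Type*} [CommRing k] [CommRing R] [Algebra k R] [AddCommGroup M] [Module R M]
  [Module k M] [IsScalarTower k R M] {N : Submodule R M}

theorem finite_quotient_of_forall_smul_mem {𝒜 : ℤ → Submodule k R} [GradedAlgebra 𝒜]
    [Module.Finite R M] [Module.Finite k (𝒜 0)]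
    (h : ∀ i ≠ 0, ∀ r ∈ 𝒜 i, ∀ m : M, r • m ∈ N) : Module.Finite k (M ⧸ N) := by
  set I := Module.annihilator R (M ⧸ N)
  have hI : ∀ i ≠ 0, ∀ r ∈ 𝒜 i, r ∈ I := fun i hi r hr => Module.mem_annihilator.2 fun q => by
    obtain ⟨m, rfl⟩ := N.mkQ_surjective q
    exact (Submodule.Quotient.mk_eq_zero N).2 (h i hi r hr m)
  have hsurj : Surjective ((Ideal.Quotient.mkₐ k I).toLinearMap ∘ₗ (𝒜 0).subtype) := fun q => by
    obtain ⟨r, rfl⟩ := Ideal.Quotient.mk_surjective q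
    induction r using Decomposition.inductionOn 𝒜 with
    | zero => exact ⟨0, by simp⟩
    | @homogeneous i r =>
      rcases eq_or_ne i 0 with rfl | hi
      · exact ⟨r, rfl⟩
      · exact ⟨0, by simp [Ideal.Quotient.eq_zero_iff_mem.2 (hI i hi r r.2)]⟩
    | add r r' hr hr' =>
      obtain ⟨x, hx⟩ := hr
      obtain ⟨y, hy⟩ := hr'
      exact ⟨x + y, by rw [map_add, hx, hy, map_add]⟩
  have := Module.Finite.of_surjective _ hsurj
  let : Module (R ⧸ I) (M ⧸ N) := Module.quotientAnnihilator
  have htors := Module.isTorsionBySet_annihilator R (M ⧸ N)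
  have : IsScalarTower R (R ⧸ I) (M ⧸ N) := htors.isScalarTower
  have : IsScalarTower k (R ⧸ I) (M ⧸ N) := htors.isScalarTower
  have : Module.Finite (R ⧸ I) (M ⧸ N) := Module.Finite.of_restrictScalars_finite R _ _
  exact Module.Finite.trans (R ⧸ I) _

variable {ℳ : ℤ → Submodule k M} {j : ℤ}

theorem gradedLength_ne_top_of_finite_quotient [IsArtinianRing k] [Module.Finite k (M ⧸ N)]
    (j : ℤ) : gradedLength ℳ N j ≠ ⊤ := by
  have hcomap : gradedPiece ℳ N j = (N.restrictScalars k).comap (ℳ j).subtype := rfl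
  have hinj : Injective ((gradedPiece ℳ N j).mapQ (N.restrictScalars k) _ hcomap.le) := by
    rw [← LinearMap.ker_eq_bot, Submodule.ker_mapQ, hcomap, Submodule.mkQ_map_self]
  have : Module.Finite k (M ⧸ N.restrictScalars k) := ‹Module.Finite k (M ⧸ N)›
  have hlength : Module.length k (M ⧸ N.restrictScalars k) ≠ ⊤ :=
    Module.length_ne_top_iff.2 (isFiniteLength_iff_isNoetherian_isArtinian.2
      ⟨inferInstance, inferInstance⟩)
  exact ne_top_of_le_ne_top hlength (Module.length_le_of_injective _ hinj)

theorem gradedLength_eq_zero_of_eq_bot (h : ℳ j = ⊥) : gradedLength ℳ N j = 0 :=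
  gradedLength_eq_zero_iff.2 fun m hm => by simp [(Submodule.mem_bot k).1 (h ▸ hm)]

variable {𝒜 : ℤ → Submodule k R} [GradedAlgebra 𝒜] [Decomposition ℳ] [SetLike.GradedSMul 𝒜 ℳ]

theorem finite_setOf_gradedLength_ne_zero [Module.Finite R M] (hN : N.IsHomogeneous ℳ)
    (h : ∀ i ≠ 0, ∀ r ∈ 𝒜 i, ∀ m : M, r • m ∈ N) : {j | gradedLength ℳ N j ≠ 0}.Finite := by
  obtain ⟨s, hs⟩ := Module.Finite.fg_top (R := R) (M := M)
  refine (finite_setOf_exists_decompose_ne_zero (ℳ := ℳ) s.finite_toSet).subset ?_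
  refine compl_subset_compl.1 fun j hj => not_not.2 <| gradedLength_eq_zero_iff.2 fun m hm => ?_
  rw [← decompose_of_mem_same ℳ hm]
  refine decompose_mem_of_span_eq_top (𝒜 := 𝒜) hs hN (fun i r hr => ?_) (fun m hm j hj => ?_) m j hj
  · rcases eq_or_ne i 0 with rfl | hi
    · exact .inr fun j hj => by rwa [sub_zero]
    · exact .inl (h i hi r hr)
  · have : (decompose ℳ m j : M) = 0 := by_contra fun hne => hj ⟨m, hm, hne⟩
    exact this ▸ N.zero_mem

theorem gradedLength_ne_top [IsArtinianRing k] [Module.Finite k (𝒜 0)] [IsNoetherian R M]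
    (h𝒜 : ∀ t < 0, 𝒜 t = ⊥) (hN : N.IsHomogeneous ℳ) (j : ℤ) : gradedLength ℳ N j ≠ ⊤ := by
  obtain ⟨b, hb⟩ := exists_forall_lt_eq_bot ℳ h𝒜
  refine homogeneous_induction (P := fun N => ∀ j, gradedLength ℳ N j ≠ ⊤) h𝒜
    (fun N _ h => ?_) (fun N hN a ha r hr hlt ih => ?_) hN j
  · have := finite_quotient_of_forall_smul_mem h
    exact gradedLength_ne_top_of_finite_quotient
  · have hfin (n : ℕ) : ∀ j < b + n, gradedLength ℳ N j ≠ ⊤ := by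
      induction n with
      | zero =>
        intro j hj
        simp [gradedLength_eq_zero_of_eq_bot (hb j (by simpa using hj))]
      | succ n ihn =>
        intro j hj
        rw [gradedLength_eq_add hN hr]
        have hle : N ≤ N.comap (LinearMap.lsmul R M r) := fun m hm => N.smul_mem r hm
        exact WithTop.add_ne_top.2 ⟨ne_top_of_le_ne_top (ihn (j - a) (by omega))
          (gradedLength_anti hle _), ih _ (isHomogeneous_sup_smul_top hN hr) hlt j⟩
    exact fun j => hfin (j + 1 - b).toNat j (by omega)

end Finiteness

theorem supportDim_quotient_sup_smul_top_add_one_le {R M : Type*} [CommRing R] [AddCommGroup M]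
    [Module R M] [Module.Finite R M] {N : Submodule R M} {r : R}
    (h : N.comap (LinearMap.lsmul R M r) = N) :
    Module.supportDim R (M ⧸ (N ⊔ r • (⊤ : Submodule R M))) + 1 ≤ Module.supportDim R (M ⧸ N) := by
  have hreg : IsSMulRegular (M ⧸ N) r := by
    refine isSMulRegular_iff_right_eq_zero_of_smul.2 fun x hx => ?_
    obtain ⟨m, rfl⟩ := N.mkQ_surjective x
    refine (Submodule.Quotient.mk_eq_zero N).2 (h ▸ ?_)
    exact (Submodule.Quotient.mk_eq_zero N).1 hx
  have hmap : (N ⊔ r • (⊤ : Submodule R M)).map N.mkQ = r • ⊤ := by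
    rw [Submodule.map_sup, Submodule.mkQ_map_self, bot_sup_eq, Submodule.map_pointwise_smul,
      Submodule.map_top, Submodule.range_mkQ]
  rw [← Module.supportDim_eq_of_equiv ((Submodule.quotEquivOfEq _ _ hmap.symm).trans
    (Submodule.quotientQuotientEquivQuotient N (N ⊔ r • ⊤) le_sup_left))]
  exact Module.supportDim_quotSMulTop_succ_le_of_notMem_minimalPrimes
    fun _ => hreg.notMem_of_mem_minimalPrimes

section Growth

variable {k R M : Type*} [CommRing k] [CommRing R] [Algebra k R] [AddCommGroup M] [Module R M]
  [Module k M] [IsScalarTower k R M] {𝒜 : ℤ → Submodule k R} {ℳ : ℤ → Submodule k M}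
  {N : Submodule R M}

theorem hilbertFunction_nonneg : 0 ≤ hilbertFunction ℳ N := fun _ => Nat.cast_nonneg _

theorem support_hilbertFunction_subset :
    support (hilbertFunction ℳ N) ⊆ {j | gradedLength ℳ N j ≠ 0} := fun j hj h =>
  hj (by simp [hilbertFunction, h])

variable [GradedAlgebra 𝒜] [Decomposition ℳ] [SetLike.GradedSMul 𝒜 ℳ]

theorem bddBelow_support_hilbertFunction [Module.Finite R M] (h𝒜 : ∀ t < 0, 𝒜 t = ⊥)
    (N : Submodule R M) : BddBelow (support (hilbertFunction ℳ N)) := by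
  obtain ⟨b, hb⟩ := exists_forall_lt_eq_bot ℳ h𝒜
  exact ⟨b, fun j hj => not_lt.1 fun hlt =>
    support_hilbertFunction_subset hj (gradedLength_eq_zero_of_eq_bot (hb j hlt))⟩

variable [IsArtinianRing k] [Module.Finite k (𝒜 0)] [IsNoetherian R M]

theorem hilbertFunction_eq_add (h𝒜 : ∀ t < 0, 𝒜 t = ⊥) (hN : N.IsHomogeneous ℳ) {a : ℤ} {r : R}
    (hr : r ∈ 𝒜 a) : hilbertFunction ℳ N = hilbertFunction ℳ (N ⊔ r • (⊤ : Submodule R M)) +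
      fun j => hilbertFunction ℳ (N.comap (LinearMap.lsmul R M r)) (j - a) := by
  ext j
  rw [Pi.add_apply, hilbertFunction, gradedLength_eq_add hN hr, ENat.toNat_add
    (gradedLength_ne_top h𝒜 (isHomogeneous_comap_lsmul hN hr) _)
    (gradedLength_ne_top h𝒜 (isHomogeneous_sup_smul_top hN hr) _), Nat.cast_add, add_comm]
  rfl

theorem cumulativeSum_hilbertFunction (h𝒜 : ∀ t < 0, 𝒜 t = ⊥) (hN : N.IsHomogeneous ℳ) {a : ℤ}
    {r : R} (hr : r ∈ 𝒜 a) : cumulativeSum (hilbertFunction ℳ N) =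
      cumulativeSum (hilbertFunction ℳ (N ⊔ r • (⊤ : Submodule R M))) + fun n =>
        cumulativeSum (hilbertFunction ℳ (N.comap (LinearMap.lsmul R M r))) (n - a) := by
  have hshift : BddBelow (support fun j =>
      hilbertFunction ℳ (N.comap (LinearMap.lsmul R M r)) (j - a)) :=
    (bddBelow_support_hilbertFunction h𝒜 _).imp' (· + a) fun b hb j hj =>
      le_sub_iff_add_le.1 (hb hj)
  rw [hilbertFunction_eq_add h𝒜 hN hr, cumulativeSum_add (bddBelow_support_hilbertFunction h𝒜 _)
    hshift, cumulativeSum_comp_sub_const]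

theorem exists_hasPolyGrowth_cumulativeSum_hilbertFunction_of_comap_lsmul_eq
    (h𝒜 : ∀ t < 0, 𝒜 t = ⊥) (hN : N.IsHomogeneous ℳ) {a : ℤ} (ha : 0 < a) {r : R} (hr : r ∈ 𝒜 a)
    (hreg : N.comap (LinearMap.lsmul R M r) = N) (hne : N ≠ ⊤)
    (ih : ∀ d : ℕ, Module.supportDim R (M ⧸ (N ⊔ r • (⊤ : Submodule R M))) ≤ d →
      ∃ L, HasPolyGrowth (cumulativeSum (hilbertFunction ℳ (N ⊔ r • (⊤ : Submodule R M)))) d L)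
    {d : ℕ} (hd : Module.supportDim R (M ⧸ N) ≤ d) :
    ∃ L, HasPolyGrowth (cumulativeSum (hilbertFunction ℳ N)) d L := by
  have hdrop := (supportDim_quotient_sup_smul_top_add_one_le hreg).trans hd
  cases d with
  | zero =>
    have hbot : Module.supportDim R (M ⧸ (N ⊔ r • (⊤ : Submodule R M))) = ⊥ :=
      (ENat.WithBot.add_one_le_zero_iff _).1 (by simpa only [Nat.cast_zero] using hdrop)
    rw [Module.supportDim_eq_bot_iff_subsingleton, Submodule.Quotient.subsingleton_iff] at hbot
    obtain ⟨b, hb⟩ := exists_forall_lt_eq_bot ℳ h𝒜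
    exact absurd (eq_top_of_sup_smul_top_eq_top hb hN ha hr hbot) hne
  | succ d =>
    rw [Nat.cast_add_one, ENat.WithBot.add_le_add_one_right_iff] at hdrop
    obtain ⟨L, hL⟩ := ih d hdrop
    have hsum := cumulativeSum_hilbertFunction h𝒜 hN hr
    rw [hreg] at hsum
    lift a to ℕ using ha.le
    exact ⟨_, HasPolyGrowth.of_eq_add_comp_sub (cumulativeSum_monotone
      (bddBelow_support_hilbertFunction h𝒜 N) hilbertFunction_nonneg) (by simpa using ha)
      (fun n => congrFun hsum n) hL⟩

theorem exists_hasPolyGrowth_cumulativeSum_hilbertFunction (h𝒜 : ∀ t < 0, 𝒜 t = ⊥)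
    (hN : N.IsHomogeneous ℳ) {d : ℕ} (hd : Module.supportDim R (M ⧸ N) ≤ d) :
    ∃ L, HasPolyGrowth (cumulativeSum (hilbertFunction ℳ N)) d L := by
  refine homogeneous_induction (ℳ := ℳ) (P := fun N => ∀ d : ℕ, Module.supportDim R (M ⧸ N) ≤ d →
    ∃ L, HasPolyGrowth (cumulativeSum (hilbertFunction ℳ N)) d L) h𝒜
    (fun N hN h d _ => ?_) (fun N hN a ha r hr hlt ih d hd => ?_) hN d hd
  · have hfin := (finite_setOf_gradedLength_ne_zero hN h).subset support_hilbertFunction_subset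
    exact HasPolyGrowth.exists_of_eventually_eq_const (cumulativeSum_eventually_eq_tsum hfin) d
  have ihsup := ih _ (isHomogeneous_sup_smul_top hN hr) hlt
  have hle : N ≤ N.comap (LinearMap.lsmul R M r) := fun m hm => N.smul_mem r hm
  rcases hle.lt_or_eq with hlt' | heq
  · have hdim {N' : Submodule R M} (h : N ≤ N') : Module.supportDim R (M ⧸ N') ≤ d :=
      (Module.supportDim_le_of_surjective _ (Submodule.factor_surjective h)).trans hd
    obtain ⟨L, hL⟩ := ihsup d (hdim le_sup_left)
    obtain ⟨K, hK⟩ := ih _ (isHomogeneous_comap_lsmul hN hr) hlt' d (hdim hle)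
    exact ⟨L + K, cumulativeSum_hilbertFunction h𝒜 hN hr ▸ hL.add (hK.comp_sub_const a)⟩
  · exact exists_hasPolyGrowth_cumulativeSum_hilbertFunction_of_comap_lsmul_eq h𝒜 hN ha hr heq.symm
      hlt.ne_top ihsup hd

end Growth

theorem hilbertFunction_bot {k R M : Type*} [CommRing k] [CommRing R] [Algebra k R]
    [AddCommGroup M] [Module R M] [Module k M] [IsScalarTower k R M] (ℳ : ℤ → Submodule k M)
    (j : ℤ) : hilbertFunction ℳ (⊥ : Submodule R M) j = (Module.length k (ℳ j)).toNat := by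
  have hbot : gradedPiece ℳ (⊥ : Submodule R M) j = ⊥ := (Submodule.eq_bot_iff _).2 fun x hx =>
    Subtype.ext ((Submodule.mem_bot R).1 hx)
  rw [hilbertFunction, gradedLength, (Submodule.quotEquivOfEqBot _ hbot).length_eq]

theorem toNat_length_eq_finrank (k V : Type*) [DivisionRing k] [AddCommGroup V] [Module k V] :
    (Module.length k V).toNat = Module.finrank k V := by
  rw [Module.length_eq_rank, Cardinal.toNat_toENat, Module.finrank]

theorem hilbert_samuel_multiplicity_exists_and_hilbert_series_limit_general {k R M : Type*}
    [CommRing k] [IsArtinianRing k] [CommRing R] [Algebra k R] {𝒜 : ℤ → Submodule k R}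
    [GradedAlgebra 𝒜] [Module.Finite k (𝒜 0)] (h𝒜 : ∀ t < 0, 𝒜 t = ⊥) [AddCommGroup M]
    [Module R M] [Module k M] [IsScalarTower k R M] [IsNoetherian R M] (ℳ : ℤ → Submodule k M)
    [DirectSum.Decomposition ℳ] [SetLike.GradedSMul 𝒜 ℳ] {d : ℕ}
    (hd : Module.supportDim R M ≤ d) :
    ∃ e : ℝ,
      Tendsto (fun n : ℕ => (d.factorial : ℝ) / (n : ℝ) ^ d *
          ∑' j : ℤ, if j ≤ (n : ℤ) then ((Module.length k (ℳ j)).toNat : ℝ) else 0)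
        atTop (𝓝 e) ∧
      Tendsto (fun t : ℝ => (1 - t) ^ d * ∑' j : ℤ, ((Module.length k (ℳ j)).toNat : ℝ) * t ^ j)
        (𝓝[Ioo 0 1] 1) (𝓝 e) := by
  have hdim : Module.supportDim R (M ⧸ (⊥ : Submodule R M)) ≤ d :=
    (Module.supportDim_eq_of_equiv (Submodule.quotEquivOfEqBot ⊥ rfl)).trans_le hd
  have hbot : (⊥ : Submodule R M).IsHomogeneous ℳ := by
    rintro j _ rfl
    simp
  obtain ⟨L, hL⟩ := exists_hasPolyGrowth_cumulativeSum_hilbertFunction h𝒜 hbot hdim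
  have hb := bddBelow_support_hilbertFunction (ℳ := ℳ) h𝒜 (⊥ : Submodule R M)
  simp only [← hilbertFunction_bot (R := R) ℳ]
  refine ⟨d ! * L, (hL.tendsto_natCast.const_mul (d ! : ℝ)).congr fun n => ?_,
    tendsto_one_sub_pow_mul_tsum_of_cumulativeSum hb hL⟩
  rw [← mul_div_assoc, mul_div_right_comm, cumulativeSum]

end

/-- **Existence of the Hilbert–Samuel multiplicity and its computation from the Hilbert
series.**  For a finitely generated `ℤ`-graded module `M` of Krull dimension `d` over a
finitely generated `ℕ`-graded `k`-algebra `R`: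
(1) `e_M = d!·lim_n n^{-d} Σ_{j ≤ n} λ_k(M_j)` exists, and
(2) `lim_{t→1⁻} (1-t)^d H_M(t) = e_M` over real `t ∈ (0,1)`. -/
theorem hilbert_samuel_multiplicity_exists_and_hilbert_series_limit
    (k R M : Type) [Field k] [CommRing R] [Algebra k R] [Algebra.FiniteType k R]
    (𝒜 : ℤ → Submodule k R) [GradedAlgebra 𝒜]
    (h𝒜neg : ∀ t : ℤ, t < 0 → 𝒜 t = ⊥)
    (h𝒜zero : ∀ x ∈ 𝒜 0, ∃ c : k, algebraMap k R c = x)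
    [AddCommGroup M] [Module R M] [Module k M] [IsScalarTower k R M] [Module.Finite R M]
    (ℳ : ℤ → Submodule k M) [DirectSum.Decomposition ℳ]
    (hℳ : ∀ (a b : ℤ), ∀ r ∈ 𝒜 a, ∀ x ∈ ℳ b, r • x ∈ ℳ (a + b))
    (d : ℕ) (hd : ringKrullDim (R ⧸ Module.annihilator R M) = d) :
    ∃ e : ℝ,
      Tendsto (fun n : ℕ => (d.factorial : ℝ) / (n : ℝ) ^ d *
          ∑' j : ℤ, (if j ≤ (n : ℤ) then (Module.finrank k (ℳ j) : ℝ) else 0))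
        atTop (nhds e) ∧
      Tendsto (fun t : ℝ => (1 - t) ^ d * ∑' j : ℤ, (Module.finrank k (ℳ j) : ℝ) * t ^ j)
        (nhdsWithin 1 (Set.Ioo 0 1)) (nhds e) := by
  have : IsNoetherianRing R := Algebra.FiniteType.isNoetherianRing k R
  have : Module.Finite k (𝒜 0) := by
    rw [Module.Finite.iff_fg]
    refine (Submodule.fg_span_singleton (1 : R)).of_le fun x hx => ?_
    obtain ⟨c, rfl⟩ := h𝒜zero x hx
    exact Submodule.mem_span_singleton.2 ⟨c, (Algebra.algebraMap_eq_smul_one c).symm⟩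
  have : SetLike.GradedSMul 𝒜 ℳ := ⟨fun {a b r x} hr hx => hℳ a b r hr x hx⟩
  have hdim : Module.supportDim R M ≤ d :=
    ((Module.supportDim_eq_ringKrullDim_quotient_annihilator R M).trans hd).le
  simp only [← toNat_length_eq_finrank]
  exact hilbert_samuel_multiplicity_exists_and_hilbert_series_limit_general h𝒜neg ℳ hdim

end
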